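/- (Proposition 1(b).) Suppose K satisfies assumption (C_K), is continuous, has support equal to [−a, a] for some a > 0, is concave on [−a, a], and attains its maximum at a unique point. Then the function δ ↦ C(δ) is nondecreasing on (0, ∞). -/

import Mathlib

open MeasureTheory

/-- `ν₀₂ = ∫ K(s)² ds`. -/
noncomputable def nu02 (K : ℝ → ℝ) : ℝ := ∫ s, K s ^ 2

/-- `C(a, δ) = ∫ K(t − aδ) K(t + aδ) dt`. -/
noncomputable def Cab (K : ℝ → ℝ) (a δ : ℝ) : ℝ := ∫ t, K (t - a * δ) * K (t + a * δ)

/-- `C(δ) = (3/2) C(0,δ) − 2 C(1/2,δ) + (1/2) C(1,δ)`. -/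
noncomputable def Cfun (K : ℝ → ℝ) (δ : ℝ) : ℝ :=
  (3 / 2) * Cab K 0 δ - 2 * Cab K (1 / 2) δ + (1 / 2) * Cab K 1 δ

/-- Assumption (C_K): `K` is a symmetric probability density with compact support. -/
def AssumptionCK (K : ℝ → ℝ) : Prop :=
  Measurable K ∧ (∀ u, 0 ≤ K u) ∧ (∫ u, K u) = 1 ∧ (∀ u, K (-u) = K u) ∧ HasCompactSupport K

namespace Aux

noncomputable def tri (c u : ℝ) : ℝ := max (c - |u|) 0

noncomputable def B (K L : ℝ → ℝ) (s : ℝ) : ℝ := ∫ t, K t * L (t + s)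

noncomputable def P (K : ℝ → ℝ) (x : ℝ) : ℝ := ∫ t in (0 : ℝ)..x, K t

noncomputable def R (K : ℝ → ℝ) (x : ℝ) : ℝ := ∫ t in (0 : ℝ)..x, P K t

lemma tri_cont (c : ℝ) : Continuous (tri c) := by
  unfold tri; fun_prop

lemma hasDeriv_P {K : ℝ → ℝ} (hc : Continuous K) (x : ℝ) : HasDerivAt (P K) (K x) x :=
  intervalIntegral.integral_hasDerivAt_right (hc.intervalIntegrable _ _)
    (hc.stronglyMeasurableAtFilter _ _) hc.continuousAt

lemma cont_P {K : ℝ → ℝ} (hc : Continuous K) : Continuous (P K) :=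
  continuous_iff_continuousAt.2 fun x => (hasDeriv_P hc x).continuousAt

lemma hasDeriv_R {K : ℝ → ℝ} (hc : Continuous K) (x : ℝ) : HasDerivAt (R K) (P K x) x :=
  hasDeriv_P (cont_P hc) x

lemma P_odd {K : ℝ → ℝ} (he : ∀ u, K (-u) = K u) (x : ℝ) : P K (-x) = - P K x := by
  unfold P
  have h := intervalIntegral.integral_comp_neg (a := 0) (b := x) (f := K)
  simp only [he, neg_zero] at h
  rw [h, intervalIntegral.integral_symm]

lemma R_even {K : ℝ → ℝ} (he : ∀ u, K (-u) = K u) (x : ℝ) : R K (-x) = R K x := by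
  unfold R
  have h := intervalIntegral.integral_comp_neg (a := 0) (b := x) (f := P K)
  simp only [P_odd he, neg_zero, intervalIntegral.integral_neg] at h
  rw [intervalIntegral.integral_symm, ← h, neg_neg]

lemma integ {K L : ℝ → ℝ} (hc : Continuous K) (hs : HasCompactSupport K) (hL : Continuous L)
    (s : ℝ) : Integrable (fun t => K t * L (t + s)) :=
  Continuous.integrable_of_hasCompactSupport (by fun_prop) hs.mul_right

lemma B_tri {K : ℝ → ℝ} (hc : Continuous K) (he : ∀ u, K (-u) = K u)
    (c : ℝ) (h0 : 0 ≤ c) (s : ℝ) :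
    B K (tri c) s = R K (s + c) + R K (s - c) - 2 * R K s := by
  have h1 : B K (tri c) s = ∫ u, K (u - s) * tri c u := by
    unfold B
    rw [← integral_add_right_eq_self (fun u => K (u - s) * tri c u) s]
    simp
  have h2 : (∫ u, K (u - s) * tri c u) = ∫ u in (-c)..c, K (u - s) * tri c u := by
    rw [intervalIntegral.integral_of_le (by linarith), ← integral_Icc_eq_integral_Ioc,
      setIntegral_eq_integral_of_forall_compl_eq_zero]
    intro u hu
    have : c ≤ |u| := by
      by_contra hlt
      push Not at hlt
      exact hu ⟨(abs_lt.1 hlt).1.le, (abs_lt.1 hlt).2.le⟩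
    rw [tri, max_eq_right (by linarith), mul_zero]
  have hcont : Continuous fun u => K (u - s) * tri c u := by
    have := tri_cont c
    fun_prop
  have h3 : (∫ u in (-c)..0, K (u - s) * tri c u) =
      c * P K (-s) - R K (-s) + R K (-c - s) := by
    have : ∀ u ∈ Set.uIcc (-c) 0, HasDerivAt
        (fun u => (c + u) * P K (u - s) - R K (u - s)) (K (u - s) * tri c u) u := by
      intro u hu
      rw [Set.uIcc_of_le (by linarith)] at hu
      have hp := (hasDeriv_P hc (u - s)).comp_sub_const u s
      have hr := (hasDeriv_R hc (u - s)).comp_sub_const u s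
      have hl : HasDerivAt (fun u : ℝ => c + u) 1 u := (hasDerivAt_id u).const_add c
      have := (hl.mul hp).sub hr
      refine this.congr_deriv ?_
      rw [tri, abs_of_nonpos hu.2, max_eq_left (by linarith [hu.1])]
      ring
    rw [intervalIntegral.integral_eq_sub_of_hasDerivAt this (hcont.intervalIntegrable _ _)]
    simp
  have h4 : (∫ u in (0)..c, K (u - s) * tri c u) =
      R K (c - s) - c * P K (-s) - R K (-s) := by
    have : ∀ u ∈ Set.uIcc 0 c, HasDerivAt
        (fun u => (c - u) * P K (u - s) + R K (u - s)) (K (u - s) * tri c u) u := by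
      intro u hu
      rw [Set.uIcc_of_le (by linarith)] at hu
      have hp := (hasDeriv_P hc (u - s)).comp_sub_const u s
      have hr := (hasDeriv_R hc (u - s)).comp_sub_const u s
      have hl : HasDerivAt (fun u : ℝ => c - u) (-1) u := (hasDerivAt_id u).const_sub c
      have := (hl.mul hp).add hr
      refine this.congr_deriv ?_
      rw [tri, abs_of_nonneg hu.1, max_eq_left (by linarith [hu.2])]
      ring
    rw [intervalIntegral.integral_eq_sub_of_hasDerivAt this (hcont.intervalIntegrable _ _)]
    simp
    ring
  rw [h1, h2, ← intervalIntegral.integral_add_adjacent_intervals (hcont.intervalIntegrable (-c) 0)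
    (hcont.intervalIntegrable 0 c), h3, h4, R_even he s]
  have e1 : R K (-c - s) = R K (s + c) := by rw [← R_even he]; congr 1; ring
  have e2 : R K (c - s) = R K (s - c) := by rw [← R_even he]; congr 1; ring
  rw [e1, e2]; ring

structure Good (K : ℝ → ℝ) (a : ℝ) : Prop where
  cont : Continuous K
  nn : ∀ u, 0 ≤ K u
  even : ∀ u, K (-u) = K u
  cs : HasCompactSupport K
  pos : 0 < a
  zero : ∀ u, a ≤ u → K u = 0
  conc : ConcaveOn ℝ (Set.Icc (-a) a) K

namespace Good

variable {K : ℝ → ℝ} {a : ℝ}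

lemma anti (h : Good K a) {x y : ℝ} (hx : 0 ≤ x) (hxy : x ≤ y) : K y ≤ K x := by
  rcases le_total a y with hy | hy
  · rw [h.zero y hy]; exact h.nn x
  rcases eq_or_lt_of_le (hx.trans hxy) with h0 | h0
  · have : x = y := by linarith
    rw [this]
  have n1 : 0 ≤ (y + x) / (2 * y) := div_nonneg (by linarith) (by linarith)
  have n2 : 0 ≤ (y - x) / (2 * y) := div_nonneg (by linarith) (by linarith)
  have m1 : y ∈ Set.Icc (-a) a := ⟨by linarith, hy⟩
  have m2 : -y ∈ Set.Icc (-a) a := ⟨by linarith, by linarith⟩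
  have := h.conc.2 m1 m2 n1 n2 (by field_simp; ring)
  rw [h.even y] at this
  simp only [smul_eq_mul] at this
  have e1 : (y + x) / (2 * y) * y + (y - x) / (2 * y) * -y = x := by field_simp; ring
  have e2 : (y + x) / (2 * y) * K y + (y - x) / (2 * y) * K y = K y := by field_simp; ring
  rwa [e1, e2] at this

lemma abs_eq (h : Good K a) (x : ℝ) : K |x| = K x := by
  rcases abs_choice x with e | e <;> rw [e]
  exact h.even x

lemma anti_abs (h : Good K a) {x y : ℝ} (hxy : |x| ≤ |y|) : K y ≤ K x := by
  rw [← h.abs_eq x, ← h.abs_eq y]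
  exact h.anti (abs_nonneg x) hxy

lemma four (h : Good K a) {x y z w : ℝ} (hx : -a ≤ x) (hw : w ≤ a) (hxy : x ≤ y) (hxz : x ≤ z)
    (hs : y + z = x + w) : K x + K w ≤ K y + K z := by
  rcases eq_or_lt_of_le (show x ≤ w by linarith) with h0 | h0
  · have : y = x := by linarith
    have : z = x := by linarith
    subst_vars; rfl
  have hp : 0 < w - x := by linarith
  have e : (w - y) / (w - x) + (y - x) / (w - x) = 1 := by field_simp; ring
  have n1 : 0 ≤ (w - y) / (w - x) := div_nonneg (by linarith) (by linarith)
  have n2 : 0 ≤ (y - x) / (w - x) := div_nonneg (by linarith) (by linarith)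
  have m1 : x ∈ Set.Icc (-a) a := ⟨by linarith, by linarith⟩
  have m2 : w ∈ Set.Icc (-a) a := ⟨by linarith, by linarith⟩
  have k1 := h.conc.2 m1 m2 n1 n2 e
  have k2 := h.conc.2 m2 m1 n1 n2 e
  simp only [smul_eq_mul] at k1 k2
  have e1 : (w - y) / (w - x) * x + (y - x) / (w - x) * w = y := by field_simp; ring
  have e2 : (w - y) / (w - x) * w + (y - x) / (w - x) * x = z := by
    have : z = x + w - y := by linarith
    rw [this]; field_simp; ring
  rw [e1] at k1
  rw [e2] at k2
  have : (y - x) / (w - x) = 1 - (w - y) / (w - x) := by linarith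
  rw [this] at k1 k2
  linarith

end Good

noncomputable def D (K : ℝ → ℝ) (a c s : ℝ) : ℝ :=
  P K (s + c) + P K (s - c) - P K (s + a) - P K (s - a)

noncomputable def D1 (K : ℝ → ℝ) (a c s : ℝ) : ℝ :=
  K (s + c) + K (s - c) - K (s + a) - K (s - a)

lemma hasDeriv_D {K : ℝ → ℝ} (hc : Continuous K) (a c s : ℝ) :
    HasDerivAt (D K a c) (D1 K a c s) s :=
  ((((hasDeriv_P hc _).comp_add_const s c).add ((hasDeriv_P hc _).comp_sub_const s c)).sub
    ((hasDeriv_P hc _).comp_add_const s a)).sub ((hasDeriv_P hc _).comp_sub_const s a)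

section
variable {K : ℝ → ℝ} {a c : ℝ}

lemma D1_anti (h : Good K a) (h0 : 0 ≤ c) (hca : c ≤ a) :
    AntitoneOn (D1 K a c) (Set.Icc 0 a) := by
  have A1 : ∀ s s', 0 ≤ s → s ≤ s' → s' ≤ c → D1 K a c s' ≤ D1 K a c s := by
    intro s s' hs hss hsc
    unfold D1
    rw [h.zero (s + a) (by linarith), h.zero (s' + a) (by linarith)]
    have k := h.anti (x := s + c) (y := s' + c) (by linarith) (by linarith)
    have k2 := h.four (x := c - s') (w := a - s) (y := c - s) (z := a - s') (by linarith)
      (by linarith) (by linarith) (by linarith) (by ring)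
    rw [← h.even (s - c), ← h.even (s' - c), ← h.even (s - a), ← h.even (s' - a)]
    simp only [neg_sub]
    linarith
  have A2 : ∀ s s', c ≤ s → s ≤ s' → s' ≤ a → D1 K a c s' ≤ D1 K a c s := by
    intro s s' hs hss hsc
    unfold D1
    rw [h.zero (s + a) (by linarith), h.zero (s' + a) (by linarith)]
    have k := h.anti (x := s + c) (y := s' + c) (by linarith) (by linarith)
    have k2 := h.anti (x := s - c) (y := s' - c) (by linarith) (by linarith)
    have k3 := h.anti (x := a - s') (y := a - s) (by linarith) (by linarith)
    rw [← h.even (s - a), ← h.even (s' - a)]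
    simp only [neg_sub]
    linarith
  intro s hs s' hs' hss
  rcases le_total s' c with h1 | h1
  · exact A1 s s' hs.1 hss h1
  rcases le_total c s with h2 | h2
  · exact A2 s s' h2 hss hs'.2
  exact (A2 c s' le_rfl h1 hs'.2).trans (A1 s c hs.1 h2 le_rfl)

lemma D_zero (h : Good K a) : D K a c 0 = 0 := by
  unfold D
  simp only [zero_add, zero_sub, P_odd h.even]
  ring

lemma D_nonneg (h : Good K a) (h0 : 0 ≤ c) (hca : c ≤ a) {s : ℝ} (hs : 0 ≤ s) :
    0 ≤ D K a c s := by
  -- derivative in the second parameter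
  have hd : ∀ r, HasDerivAt (fun r => P K (s + r) + P K (s - r)) (K (s + r) - K (s - r)) r := by
    intro r
    have := ((hasDeriv_P h.cont _).comp_const_add s r).add ((hasDeriv_P h.cont _).comp_const_sub s r)
    exact this.congr_deriv (by ring)
  have : AntitoneOn (fun r => P K (s + r) + P K (s - r)) (Set.Ici 0) := by
    apply antitoneOn_of_deriv_nonpos (convex_Ici 0)
    · exact fun r _ => (hd r).continuousAt.continuousWithinAt
    · exact fun r _ => (hd r).differentiableAt.differentiableWithinAt
    · intro r hr
      rw [interior_Ici] at hr
      have hr : 0 < r := hr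
      rw [(hd r).deriv]
      have : K (s + r) ≤ K (s - r) := by
        apply h.anti_abs
        rw [abs_of_nonneg (show 0 ≤ s + r by linarith), abs_le]
        constructor <;> linarith
      linarith
  have := this (Set.mem_Ici.2 h0) (Set.mem_Ici.2 h.pos.le) hca
  simp only at this
  unfold D
  linarith

lemma D_anti (h : Good K a) (h0 : 0 ≤ c) (hca : c ≤ a) :
    AntitoneOn (D K a c) (Set.Ici a) := by
  apply antitoneOn_of_deriv_nonpos (convex_Ici a)
  · exact fun r _ => (hasDeriv_D h.cont a c r).continuousAt.continuousWithinAt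
  · exact fun r _ => (hasDeriv_D h.cont a c r).differentiableAt.differentiableWithinAt
  · intro r hr
    rw [interior_Ici] at hr
    have hr : a < r := hr
    rw [(hasDeriv_D h.cont a c r).deriv]
    unfold D1
    have := h.pos
    rw [h.zero (r + c) (by linarith), h.zero (r + a) (by linarith)]
    have := h.anti (x := r - a) (y := r - c) (by linarith) (by linarith)
    linarith

lemma D_conc (h : Good K a) (h0 : 0 ≤ c) (hca : c ≤ a) :
    ConcaveOn ℝ (Set.Icc 0 a) (D K a c) := by
  have hd : deriv (D K a c) = D1 K a c := funext fun r => (hasDeriv_D h.cont a c r).deriv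
  apply AntitoneOn.concaveOn_of_deriv (convex_Icc 0 a)
  · exact fun r _ => (hasDeriv_D h.cont a c r).continuousAt.continuousWithinAt
  · exact fun r _ => (hasDeriv_D h.cont a c r).differentiableAt.differentiableWithinAt
  · rw [hd]
    exact (D1_anti h h0 hca).mono interior_subset

lemma D_star (h : Good K a) (h0 : 0 ≤ c) (hca : c ≤ a) {s t : ℝ} (hs : 0 ≤ s) (ht : 0 < t)
    (hta : t ≤ a) (hst : s ≤ t) (h2 : t ≤ 2 * s) : D K a c t ≤ 2 * D K a c s := by
  have n1 : 0 ≤ s / t := by positivity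
  have n2 : 0 ≤ (t - s) / t := div_nonneg (by linarith) ht.le
  have m1 : t ∈ Set.Icc 0 a := ⟨ht.le, hta⟩
  have m2 : (0 : ℝ) ∈ Set.Icc 0 a := ⟨le_rfl, h.pos.le⟩
  have k := (D_conc h h0 hca).2 m1 m2 n1 n2 (by field_simp; ring)
  simp only [smul_eq_mul, D_zero h, mul_zero, add_zero] at k
  rw [div_mul_cancel₀ _ ht.ne'] at k
  have : 1 / 2 ≤ s / t := by rw [div_le_div_iff₀ (by norm_num) ht]; linarith
  have := mul_le_mul_of_nonneg_right this (D_nonneg h h0 hca ht.le)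
  linarith

lemma D_double (h : Good K a) (h0 : 0 ≤ c) (hca : c ≤ a) {s : ℝ} (hs : 0 < s) :
    D K a c (2 * s) ≤ 2 * D K a c s := by
  rcases le_total (2 * s) a with h1 | h1
  · exact D_star h h0 hca hs.le (by linarith) h1 (by linarith) le_rfl
  rcases le_total s a with h2 | h2
  · exact (D_anti h h0 hca Set.self_mem_Ici h1 h1).trans
      (D_star h h0 hca hs.le h.pos le_rfl h2 h1)
  · have k1 := D_anti h h0 hca (Set.mem_Ici.2 h2) (Set.mem_Ici.2 h1) (by linarith)
    have k2 := D_nonneg h h0 hca hs.le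
    linarith

noncomputable def Phi (K L : ℝ → ℝ) (s : ℝ) : ℝ :=
  (3 / 2) * B K L 0 - 2 * B K L s + (1 / 2) * B K L (2 * s)

lemma Phi_mono (h : Good K a) (h0 : 0 ≤ c) (hca : c ≤ a) :
    MonotoneOn (fun s => Phi K (tri a) s - Phi K (tri c) s) (Set.Ioi 0) := by
  have hB : ∀ s, HasDerivAt (fun s => B K (tri a) s - B K (tri c) s) (- D K a c s) s := by
    intro s
    have e : (fun s => B K (tri a) s - B K (tri c) s) =
        fun s => (R K (s + a) + R K (s - a)) - (R K (s + c) + R K (s - c)) := by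
      funext s
      rw [B_tri h.cont h.even a h.pos.le, B_tri h.cont h.even c h0]; ring
    rw [e]
    have := (((hasDeriv_R h.cont _).comp_add_const s a).add
      ((hasDeriv_R h.cont _).comp_sub_const s a)).sub
      (((hasDeriv_R h.cont _).comp_add_const s c).add ((hasDeriv_R h.cont _).comp_sub_const s c))
    refine this.congr_deriv ?_
    unfold D; ring
  have hd : ∀ s, HasDerivAt (fun s => Phi K (tri a) s - Phi K (tri c) s)
      (2 * D K a c s - D K a c (2 * s)) s := by
    intro s
    have h2 : HasDerivAt (fun s : ℝ => 2 * s) 2 s := by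
      simpa using (hasDerivAt_id s).const_mul 2
    have k := (((hB s).const_mul (-2)).add (((hB (2 * s)).comp s h2).const_mul (1 / 2))).const_add
      ((3 / 2) * (B K (tri a) 0 - B K (tri c) 0))
    have e : (fun s => Phi K (tri a) s - Phi K (tri c) s) = fun s =>
        (3 / 2) * (B K (tri a) 0 - B K (tri c) 0) + (-2 * (B K (tri a) s - B K (tri c) s) +
          1 / 2 * (B K (tri a) (2 * s) - B K (tri c) (2 * s))) := by
      funext s
      simp only [Phi]
      ring
    rw [e]
    exact k.congr_deriv (by ring)
  apply monotoneOn_of_deriv_nonneg (convex_Ioi 0)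
  · exact fun r _ => (hd r).continuousAt.continuousWithinAt
  · exact fun r _ => (hd r).differentiableAt.differentiableWithinAt
  · intro r hr
    rw [interior_Ioi] at hr
    rw [(hd r).deriv]
    have := D_double h h0 hca hr
    linarith

/-! Approximation by nonnegative combinations. -/

noncomputable def slope (K : ℝ → ℝ) (h : ℝ) (j : ℕ) : ℝ := (K (j * h) - K ((j + 1 : ℕ) * h)) / h

noncomputable def S (K : ℝ → ℝ) (h : ℝ) (n : ℕ) (t : ℝ) : ℝ :=
  ∑ j ∈ Finset.range n, slope K h j * (tri ((j + 1 : ℕ) * h) t - tri (j * h) t)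

lemma slope_nonneg (g : Good K a) {h : ℝ} (hh : 0 < h) (j : ℕ) : 0 ≤ slope K h j := by
  unfold slope
  apply div_nonneg _ hh.le
  rw [sub_nonneg]
  apply g.anti (by positivity)
  push_cast; nlinarith

lemma slope_mono (g : Good K a) {h : ℝ} (hh : 0 < h) (j : ℕ) (hj : ((j + 2 : ℕ) : ℝ) * h ≤ a) :
    slope K h j ≤ slope K h (j + 1) := by
  unfold slope
  apply div_le_div_of_nonneg_right _ hh.le
  have : 0 ≤ (j : ℝ) * h := by positivity
  have := g.pos
  have k := g.four (x := j * h) (y := (j + 1 : ℕ) * h) (z := (j + 1 : ℕ) * h)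
    (w := (j + 1 + 1 : ℕ) * h) (by linarith) hj (by push_cast; linarith) (by push_cast; linarith)
    (by push_cast; ring)
  linarith

lemma abel (m G : ℕ → ℝ) (N : ℕ) (hm : ∀ j < N, m j ≤ m (j + 1)) (hm0 : 0 ≤ m 0)
    (hG : ∀ j ≤ N, 0 ≤ G j) :
    - (m N * G (N + 1)) ≤ ∑ j ∈ Finset.range (N + 1), m j * (G j - G (j + 1)) := by
  induction N with
  | zero =>
    simp only [zero_add, Finset.sum_range_one]
    nlinarith [mul_nonneg hm0 (hG 0 le_rfl)]
  | succ N ih =>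
    rw [Finset.sum_range_succ]
    have k := ih (fun j hj => hm j (by omega)) (fun j hj => hG j (by omega))
    have k1 := mul_le_mul_of_nonneg_right (hm N (by omega)) (hG (N + 1) le_rfl)
    linarith

lemma phi_props {h : ℝ} (hh : 0 < h) (j : ℕ) (t : ℝ) :
    0 ≤ tri ((j + 1 : ℕ) * h) t - tri (j * h) t ∧ tri ((j + 1 : ℕ) * h) t - tri (j * h) t ≤ h ∧
    (|t| ≤ j * h → tri ((j + 1 : ℕ) * h) t - tri (j * h) t = h) ∧
    ((j + 1 : ℕ) * h ≤ |t| → tri ((j + 1 : ℕ) * h) t - tri (j * h) t = 0) := by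
  unfold tri
  push_cast
  have e : ((j : ℝ) + 1) * h = j * h + h := by ring
  rw [e]
  rcases max_cases ((j : ℝ) * h + h - |t|) 0 with h1 | h1 <;>
  rcases max_cases ((j : ℝ) * h - |t|) 0 with h2 | h2 <;>
  refine ⟨?_, ?_, fun _ => ?_, fun _ => ?_⟩ <;> linarith [h1.1, h1.2, h2.1, h2.2]

lemma S_lower (g : Good K a) {h : ℝ} (hh : 0 < h) (n : ℕ) (t : ℝ) :
    0 ≤ S K h n t ∧ K (|t| + h) - K (n * h) ≤ S K h n t := by
  induction n with
  | zero =>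
    simp only [S, Finset.range_zero, Finset.sum_empty, Nat.cast_zero, zero_mul]
    have := g.anti (x := 0) (y := |t| + h) le_rfl (by positivity)
    exact ⟨le_rfl, by linarith⟩
  | succ n ih =>
    have e : S K h (n + 1) t = S K h n t +
      slope K h n * (tri ((n + 1 : ℕ) * h) t - tri (n * h) t) := Finset.sum_range_succ _ _
    obtain ⟨p1, p2, p3, p4⟩ := phi_props hh n t
    have hs := slope_nonneg g hh n
    have hp := mul_nonneg hs p1
    refine ⟨by rw [e]; linarith [ih.1], ?_⟩
    rcases le_total |t| (n * h) with h1 | h1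
    · rw [e, p3 h1]
      have : slope K h n * h = K (n * h) - K ((n + 1 : ℕ) * h) := by
        unfold slope; field_simp
      linarith [ih.2]
    · have := g.anti (x := (n + 1 : ℕ) * h) (y := |t| + h) (by positivity) (by push_cast; linarith)
      rw [e]
      linarith [ih.1]

lemma S_upper (g : Good K a) {h : ℝ} (hh : 0 < h) (n : ℕ) (t : ℝ) :
    (n * h ≤ |t| → S K h n t = 0) ∧
    (|t| - h ≤ n * h → S K h n t ≤ K (max (|t| - h) 0) - K (n * h)) := by
  induction n with
  | zero =>
    simp only [S, Finset.range_zero, Finset.sum_empty, Nat.cast_zero, zero_mul]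
    refine ⟨fun _ => by trivial, fun h1 => ?_⟩
    rw [max_eq_right h1, sub_self]
  | succ n ih =>
    have e : S K h (n + 1) t = S K h n t +
      slope K h n * (tri ((n + 1 : ℕ) * h) t - tri (n * h) t) := Finset.sum_range_succ _ _
    obtain ⟨p1, p2, p3, p4⟩ := phi_props hh n t
    have hs := slope_nonneg g hh n
    have hp := mul_nonneg hs p1
    have z : ((n + 1 : ℕ) : ℝ) * h ≤ |t| → S K h (n + 1) t = 0 := by
      intro h1
      rw [e, p4 h1, ih.1 (by push_cast at h1; linarith)]; ring
    refine ⟨z, fun h1 => ?_⟩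
    rcases le_total ((n + 1 : ℕ) * h) |t| with h2 | h2
    · rw [z h2, sub_nonneg]
      exact g.anti (by positivity) (max_le h1 (by positivity))
    · have k := ih.2 (by push_cast at h2; linarith)
      have k2 := mul_le_mul_of_nonneg_left p2 hs
      have : slope K h n * h = K (n * h) - K ((n + 1 : ℕ) * h) := by
        unfold slope; field_simp
      rw [e]; linarith

lemma S_cont (h : ℝ) (n : ℕ) : Continuous (S K h n) := by
  unfold S
  exact continuous_finsetSum _ fun j _ =>
    continuous_const.mul ((tri_cont _).sub (tri_cont _))

lemma S_approx (g : Good K a) {ε : ℝ} (hε : 0 < ε) :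
    ∃ n : ℕ, ∀ t, |S K (a / (n + 1 : ℕ)) (n + 1) t - K t| ≤ ε := by
  have hu : UniformContinuous K := g.cs.uniformContinuous_of_continuous g.cont
  obtain ⟨d, hd, H⟩ := Metric.uniformContinuous_iff.1 hu ε hε
  obtain ⟨n, hn⟩ := exists_nat_gt (a / d)
  refine ⟨n, fun t => ?_⟩
  have hN : (0 : ℝ) < ((n + 1 : ℕ) : ℝ) := by positivity
  set h := a / ((n + 1 : ℕ) : ℝ) with hhdef
  have hh : 0 < h := div_pos g.pos hN
  have hhd : h < d := by
    rw [hhdef, div_lt_iff₀ hN]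
    rw [div_lt_iff₀ hd] at hn
    push_cast; nlinarith
  have hNh : ((n + 1 : ℕ) : ℝ) * h = a := by rw [hhdef]; field_simp
  have hKa : K (((n + 1 : ℕ) : ℝ) * h) = 0 := by rw [hNh]; exact g.zero a le_rfl
  have l := (S_lower g hh (n + 1) t).2
  have u := S_upper g hh (n + 1) t
  rw [hKa, sub_zero] at l u
  rw [← g.abs_eq t, abs_le]
  have h1 : dist (K (|t| + h)) (K |t|) < ε := H (by
    rw [Real.dist_eq]; simpa [abs_of_pos hh] using hhd)
  have h2 : dist (K (max (|t| - h) 0)) (K |t|) < ε := H (by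
    rw [Real.dist_eq, abs_lt]
    have := abs_nonneg t
    rcases max_cases (|t| - h) 0 with q | q <;> constructor <;> linarith [q.1, q.2])
  rw [Real.dist_eq, abs_lt] at h1 h2
  refine ⟨by linarith, ?_⟩
  rcases le_total (((n + 1 : ℕ) : ℝ) * h) |t| with h3 | h3
  · rw [u.1 h3]; linarith [g.nn |t|]
  · linarith [u.2 (by linarith)]

lemma B_S (g : Good K a) (h : ℝ) (n : ℕ) (s : ℝ) : B K (S K h n) s =
    ∑ j ∈ Finset.range n, slope K h j * (B K (tri ((j + 1 : ℕ) * h)) s - B K (tri (j * h)) s) := by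
  unfold B
  have : ∀ j : ℕ, slope K h j * ((∫ t, K t * tri ((j + 1 : ℕ) * h) (t + s)) -
      ∫ t, K t * tri (j * h) (t + s)) =
      ∫ t, slope K h j * (K t * tri ((j + 1 : ℕ) * h) (t + s) - K t * tri (j * h) (t + s)) := by
    intro j
    rw [integral_const_mul, integral_sub (integ g.cont g.cs (tri_cont _) s)
      (integ g.cont g.cs (tri_cont _) s)]
  simp only [this]
  rw [← integral_finsetSum]
  · congr 1; funext t
    rw [S, Finset.mul_sum]
    refine Finset.sum_congr rfl fun j _ => ?_
    ring
  · intro j _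
    exact ((integ g.cont g.cs (tri_cont _) s).sub (integ g.cont g.cs (tri_cont _) s)).const_mul _

lemma Phi_S (g : Good K a) (h : ℝ) (n : ℕ) (s : ℝ) : Phi K (S K h n) s =
    ∑ j ∈ Finset.range n,
      slope K h j * (Phi K (tri ((j + 1 : ℕ) * h)) s - Phi K (tri (j * h)) s) := by
  unfold Phi
  simp only [B_S g, Finset.mul_sum]
  rw [← Finset.sum_sub_distrib, ← Finset.sum_add_distrib]
  refine Finset.sum_congr rfl fun j _ => ?_
  ring

lemma Phi_S_mono (g : Good K a) (n : ℕ) :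
    MonotoneOn (Phi K (S K (a / (n + 1 : ℕ)) (n + 1))) (Set.Ioi 0) := by
  intro x hx y hy hxy
  have hN : (0 : ℝ) < ((n + 1 : ℕ) : ℝ) := by positivity
  set h := a / ((n + 1 : ℕ) : ℝ) with hhdef
  have hh : 0 < h := div_pos g.pos hN
  have hNh : ((n + 1 : ℕ) : ℝ) * h = a := by rw [hhdef]; field_simp
  have hle : ∀ j : ℕ, j ≤ n + 1 → (j : ℝ) * h ≤ a := by
    intro j hj
    rw [← hNh]
    exact mul_le_mul_of_nonneg_right (by exact_mod_cast hj) hh.le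
  let G : ℕ → ℝ := fun j => (Phi K (tri a) y - Phi K (tri (j * h)) y) -
    (Phi K (tri a) x - Phi K (tri (j * h)) x)
  have hG : ∀ j ≤ n, 0 ≤ G j := fun j hj =>
    sub_nonneg.2 (Phi_mono g (by positivity) (hle j (by omega)) hx hy hxy)
  have k := abel (slope K h) G n (fun j hj => slope_mono g hh j (hle (j + 2) (by omega)))
    (slope_nonneg g hh 0) hG
  have hG1 : G (n + 1) = 0 := by simp only [G, hNh]; ring
  rw [hG1, mul_zero, neg_zero] at k
  rw [← sub_nonneg, Phi_S g, Phi_S g, ← Finset.sum_sub_distrib]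
  refine k.trans (le_of_eq (Finset.sum_congr rfl fun j _ => ?_))
  simp only [G]
  ring

lemma B_close (g : Good K a) (hone : ∫ t, K t = 1) {L : ℝ → ℝ} (hL : Continuous L) {ε : ℝ}
    (hLK : ∀ t, |L t - K t| ≤ ε) (s : ℝ) : |B K L s - B K K s| ≤ ε := by
  unfold B
  rw [← integral_sub (integ g.cont g.cs hL s) (integ g.cont g.cs g.cont s), ← Real.norm_eq_abs]
  have hi : Integrable K := g.cont.integrable_of_hasCompactSupport g.cs
  have : ε = ∫ t, K t * ε := by rw [integral_mul_const, hone, one_mul]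
  rw [this]
  apply norm_integral_le_of_norm_le (hi.mul_const ε)
  refine Filter.Eventually.of_forall fun t => ?_
  rw [← mul_sub, norm_mul, Real.norm_eq_abs, Real.norm_eq_abs, abs_of_nonneg (g.nn t)]
  exact mul_le_mul_of_nonneg_left (hLK _) (g.nn t)

lemma Phi_K_mono (g : Good K a) (hone : ∫ t, K t = 1) : MonotoneOn (Phi K K) (Set.Ioi 0) := by
  intro x hx y hy hxy
  apply le_of_forall_pos_le_add
  intro ε hε
  obtain ⟨n, hn⟩ := S_approx g (show 0 < ε / 8 by linarith)
  have k := Phi_S_mono g n hx hy hxy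
  have c := fun s => abs_le.1 (B_close g hone (S_cont _ _) hn s)
  unfold Phi at k ⊢
  linarith [(c x).1, (c x).2, (c y).1, (c y).2, (c (2 * x)).1, (c (2 * x)).2, (c (2 * y)).1,
    (c (2 * y)).2]

end

lemma Cab_eq (K : ℝ → ℝ) (b s : ℝ) : Cab K b s = B K K (2 * b * s) := by
  unfold Cab B
  rw [← integral_sub_right_eq_self (fun t => K t * K (t + 2 * b * s)) (b * s)]
  congr 1; funext t
  congr 2; ring

lemma Cfun_eq (K : ℝ → ℝ) : Cfun K = Phi K K := by
  funext s
  simp only [Cfun, Phi, Cab_eq]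
  norm_num

end Aux

/-- Proposition 1(b): if moreover `K` is continuous, has support `[−a, a]` (for some `a > 0`),
is concave on `[−a, a]`, and attains its maximum at a unique point, then `δ ↦ C(δ)` is
nondecreasing on `(0, ∞)`. -/
theorem statement2 (K : ℝ → ℝ) (hK : AssumptionCK K) (hKcont : Continuous K)
    (a : ℝ) (ha : 0 < a) (hsupp : tsupport K = Set.Icc (-a) a)
    (hconc : ConcaveOn ℝ (Set.Icc (-a) a) K)
    (hmax : ∃! u : ℝ, ∀ v : ℝ, K v ≤ K u) :
    MonotoneOn (Cfun K) (Set.Ioi (0 : ℝ)) := by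
  obtain ⟨-, hnn, hone, heven, hcs⟩ := hK
  have hz : ∀ u, a < u → K u = 0 := by
    intro u hu
    apply image_eq_zero_of_notMem_tsupport
    rw [hsupp]
    exact fun hm => absurd hm.2 (not_le.2 hu)
  have hza : K a = 0 := by
    have h1 : Filter.Tendsto K (nhdsWithin a (Set.Ioi a)) (nhds (K a)) :=
      hKcont.continuousAt.tendsto.mono_left nhdsWithin_le_nhds
    have h2 : Filter.Tendsto K (nhdsWithin a (Set.Ioi a)) (nhds 0) := by
      refine tendsto_const_nhds.congr' ?_
      filter_upwards [self_mem_nhdsWithin] with u hu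
      exact (hz u hu).symm
    exact tendsto_nhds_unique h1 h2
  have g : Aux.Good K a := ⟨hKcont, hnn, heven, hcs, ha, fun u hu => by
    rcases eq_or_lt_of_le hu with h | h
    · rw [← h, hza]
    · exact hz u h, hconc⟩
  rw [Aux.Cfun_eq]
  exact Aux.Phi_K_mono g hone
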